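/- For each natural number n let φₙ = (⊞ⁿ(p)) ⊞ q, where p and q are distinct propositional variables. Then for all i ≠ j, {φᵢ} ⊬_⊞ φⱼ. Consequently, the interderivability relation ⊣⊢_⊞ partitions the set of formulas in the two variables {p,q} into infinitely many equivalence classes. -/

import Mathlib

/-- Formulas built from countably many propositional variables with a single
binary connective `⊞` (platypus). -/
inductive Fm : Type where
  | var : ℕ → Fm
  | pl : Fm → Fm → Fm
deriving DecidableEq

namespace Fm

/-- The set of propositional variables occurring in a formula. -/
def vars : Fm → Set ℕ
  | var n => {n}
  | pl a b => vars a ∪ vars b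

/-- A `𝔅_⊞`-valuation: a two-valued function such that
`v (φ ⊞ ψ) ∈ {min (v φ) (v ψ), max (v φ) (v ψ)}`. -/
def IsVal (v : Fm → Bool) : Prop :=
  ∀ a b : Fm, v (a.pl b) = (v a && v b) ∨ v (a.pl b) = (v a || v b)

/-- The multiple-conclusion consequence `Γ ⊩_⊞ Δ`. -/
def Mc (Γ Δ : Set Fm) : Prop :=
  ∀ v : Fm → Bool, IsVal v → (∀ φ ∈ Γ, v φ = true) → ∃ ψ ∈ Δ, v ψ = true

/-- The single-conclusion consequence `Γ ⊢_⊞ φ`. -/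
def Sc (Γ : Set Fm) (φ : Fm) : Prop := Mc Γ {φ}

end Fm

namespace Fm

/-- Iterated platypus: `⊞⁰(φ) = φ`, `⊞^{n+1}(φ) = (⊞ⁿ(φ)) ⊞ φ`. -/
def iter (φ : Fm) : ℕ → Fm
  | 0 => φ
  | n + 1 => (iter φ n).pl φ

end Fm

namespace Fm

/-- Valuation making only `var p` true and using `or` exactly at `t`. -/
def auxVal (p : ℕ) (t : Fm) : Fm → Bool
  | var n => decide (n = p)
  | pl a b => if pl a b = t then (auxVal p t a || auxVal p t b)
      else (auxVal p t a && auxVal p t b)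

theorem auxVal_isVal (p : ℕ) (t : Fm) : IsVal (auxVal p t) := by
  intro a b
  by_cases h : pl a b = t
  · right; simp only [auxVal, if_pos h]
  · left; simp only [auxVal, if_neg h]

theorem auxVal_iter (p : ℕ) (t : Fm) (n : ℕ) : auxVal p t ((var p).iter n) = true := by
  induction n with
  | zero => simp [iter, auxVal]
  | succ k ih =>
    have h0 : auxVal p t (var p) = true := by simp [auxVal]
    simp only [iter]
    rcases auxVal_isVal p t ((var p).iter k) (var p) with h | h <;> rw [h, ih, h0] <;> rfl

theorem iter_inj (φ : Fm) : ∀ i j : ℕ, φ.iter i = φ.iter j → i = j := by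
  have key : ∀ n, sizeOf (φ.iter n) < sizeOf (φ.iter (n + 1)) := by
    intro n
    simp only [iter, pl.sizeOf_spec]
    omega
  exact fun i j h => (strictMono_nat_of_lt_succ (f := fun n => sizeOf (φ.iter n)) key).injective
    (congrArg sizeOf h)

theorem iter_vars (p n : ℕ) : ((var p).iter n).vars = {p} := by
  induction n with
  | zero => rfl
  | succ k ih => simp [iter, vars, ih]

theorem not_sc (p q : ℕ) (hpq : p ≠ q) (i j : ℕ) (hij : i ≠ j) :
    ¬ Sc {((var p).iter i).pl (var q)} (((var p).iter j).pl (var q)) := by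
  intro h
  have hq : auxVal p (((var p).iter i).pl (var q)) (var q) = false := by
    simp [auxVal, hpq.symm]
  obtain ⟨ψ, hψ, hv⟩ := h (auxVal p (((var p).iter i).pl (var q))) (auxVal_isVal _ _) (by
    intro φ hφ
    rw [Set.mem_singleton_iff.1 hφ, auxVal, if_pos rfl, auxVal_iter]
    rfl)
  rw [Set.mem_singleton_iff.1 hψ, auxVal, if_neg, hq] at hv
  · simp at hv
  · intro e
    exact hij (iter_inj _ _ _ (pl.inj e).1).symm

theorem sc_trans {Γ : Set Fm} {a b : Fm} (h : Sc Γ a) (h' : Sc {a} b) : Sc Γ b := by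
  intro v hv hΓ
  obtain ⟨ψ, hψ, h1⟩ := h v hv hΓ
  apply h' v hv
  intro φ hφ
  rw [Set.mem_singleton_iff.1 hφ, ← Set.mem_singleton_iff.1 hψ, h1]

theorem sc_refl (a : Fm) : Sc {a} a := fun _ _ h => ⟨a, rfl, h a rfl⟩

end Fm

open Fm in
/-- with `φₙ = (⊞ⁿ p) ⊞ q` for distinct variables `p, q`, we have
`{φᵢ} ⊬_⊞ φⱼ` whenever `i ≠ j`; consequently interderivability `⊣⊢_⊞` has
infinitely many equivalence classes on the formulas in the variables `{p, q}`. -/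
theorem platypus_infinitely_many_classes (p q : ℕ) (hpq : p ≠ q) :
    (∀ i j : ℕ, i ≠ j →
      ¬ Sc {((Fm.var p).iter i).pl (Fm.var q)} (((Fm.var p).iter j).pl (Fm.var q))) ∧
    Infinite (Quot (fun φ ψ : {φ : Fm // φ.vars ⊆ {p, q}} =>
      Sc {φ.1} ψ.1 ∧ Sc {ψ.1} φ.1)) := by
  refine ⟨not_sc p q hpq, ?_⟩
  have hv : ∀ n, (((Fm.var p).iter n).pl (Fm.var q)).vars ⊆ {p, q} := by
    intro n
    simp only [vars, iter_vars]
    exact subset_rfl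
  refine Infinite.of_injective (fun n : ℕ => Quot.mk _
    (⟨((Fm.var p).iter n).pl (Fm.var q), hv n⟩ : {φ : Fm // φ.vars ⊆ {p, q}})) ?_
  intro i j hij
  by_contra hne
  have := congrArg (Quot.lift (fun φ : {φ : Fm // φ.vars ⊆ {p, q}} =>
    Sc {((Fm.var p).iter i).pl (Fm.var q)} φ.1)
    (fun a b hab => propext ⟨fun h => sc_trans h hab.1, fun h => sc_trans h hab.2⟩)) hij
  exact not_sc p q hpq i j hne (this.mp (sc_refl _))
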